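/- Let B₁,…,B_m be symmetric real n×n matrices. Then Σ_{α,β=1}^m ‖[B_α,B_β]‖² + Σ_{α,β=1}^m ⟨B_α,B_β⟩² ≤ (3/2)(Σ_{α=1}^m ‖B_α‖²)². -/

import Mathlib

open Matrix

noncomputable def frobInner {n : ℕ} (A B : Matrix (Fin n) (Fin n) ℝ) : ℝ :=
  (Aᵀ * B).trace

noncomputable def frobSq {n : ℕ} (A : Matrix (Fin n) (Fin n) ℝ) : ℝ :=
  frobInner A A

def mcomm {n : ℕ} (A B : Matrix (Fin n) (Fin n) ℝ) : Matrix (Fin n) (Fin n) ℝ :=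
  A * B - B * A

/-!
Replacing the family `B` by an orthogonal recombination of itself changes neither side of the
inequality, so after diagonalising the Gram matrix of `B` we may assume the `B α` pairwise
orthogonal.

For a symmetric `A` and pairwise orthogonal symmetric `B β` with `‖B β‖² ≤ M`, one has
`∑ β, ‖⁅A, B β⁆‖² ≤ ‖A‖² (∑ β, ‖B β‖² + M)`. Indeed, if `A` is diagonal with entries `d i`, the left
side is `∑ i j, w i j (d i - d j)²` with `w i j = ∑ β, (B β i j)²`, and Bessel's inequality gives
`w i j ≤ M / 2` for `i ≠ j`. It remains to use that the largest Laplacian eigenvalue of a graph with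
edge weights in `[0, c]` is at most the total weight plus `c`.

Write `x₁ ≥ x₂ ≥ …` for the `‖B β‖²` in decreasing order. Applying this bound to each `B α` and the
`B β` that come after it shows that the left side of the inequality is at most
`(∑ xₖ)² + 2 ∑ xₖ xₖ₊₁`, where `∑ xₖ xₖ₊₁ ≤ (x₁ + x₃ + …) (x₂ + x₄ + …) ≤ (∑ xₖ)² / 4`.
-/

section Bessel

variable {E κ : Type*} [SeminormedAddCommGroup E] [InnerProductSpace ℝ E]

lemma norm_sum_smul_sq (s : Finset κ) (c : κ → ℝ) (v : κ → E) :
    ‖∑ e ∈ s, c e • v e‖ ^ 2 = ∑ e ∈ s, ∑ f ∈ s, c e * c f * inner ℝ (v e) (v f) := by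
  rw [← real_inner_self_eq_norm_sq, sum_inner]
  simp only [inner_sum, real_inner_smul_left, real_inner_smul_right, mul_assoc, mul_left_comm]

lemma sum_mul_inner_sq_le_of_norm_sum_smul_sq_le {s : Finset κ} {w : κ → ℝ} {v : κ → E} {x : E}
    {K : ℝ} (hK : 0 ≤ K)
    (h : ‖∑ e ∈ s, (w e * inner ℝ (v e) x) • v e‖ ^ 2 ≤
      K * ∑ e ∈ s, w e * inner ℝ (v e) x ^ 2) :
    ∑ e ∈ s, w e * inner ℝ (v e) x ^ 2 ≤ K * ‖x‖ ^ 2 := by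
  set y := ∑ e ∈ s, (w e * inner ℝ (v e) x) • v e with hy
  set T := ∑ e ∈ s, w e * inner ℝ (v e) x ^ 2 with hT
  have hyx : inner ℝ y x = T := by
    simp only [hy, hT, sum_inner, real_inner_smul_left, sq, mul_assoc]
  have hTT : T * T ≤ T * (K * ‖x‖ ^ 2) :=
    calc T * T ≤ ‖y‖ ^ 2 * ‖x‖ ^ 2 := by
          simpa only [hyx, real_inner_self_eq_norm_sq] using real_inner_mul_inner_self_le y x
      _ ≤ K * T * ‖x‖ ^ 2 := by gcongr
      _ = T * (K * ‖x‖ ^ 2) := by ring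
  rcases le_or_gt T 0 with hT0 | hT0
  · exact hT0.trans (by positivity)
  · exact le_of_mul_le_mul_left hTT hT0

theorem sum_inner_sq_le_of_pairwise_orthogonal {s : Finset κ} {v : κ → E} {M : ℝ} (hM0 : 0 ≤ M)
    (hv : (s : Set κ).Pairwise fun a b => inner ℝ (v a) (v b) = 0)
    (hM : ∀ a ∈ s, ‖v a‖ ^ 2 ≤ M) (x : E) :
    ∑ a ∈ s, inner ℝ (v a) x ^ 2 ≤ M * ‖x‖ ^ 2 := by
  suffices h : ‖∑ a ∈ s, ((1 : ℝ) * inner ℝ (v a) x) • v a‖ ^ 2 ≤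
      M * ∑ a ∈ s, (1 : ℝ) * inner ℝ (v a) x ^ 2 by
    simpa only [one_mul] using sum_mul_inner_sq_le_of_norm_sum_smul_sq_le hM0 h
  simp only [one_mul, norm_sum_smul_sq, Finset.mul_sum]
  refine Finset.sum_le_sum fun a ha => ?_
  rw [Finset.sum_eq_single_of_mem a ha fun b hb hba => by rw [hv ha hb hba.symm, mul_zero],
    real_inner_self_eq_norm_sq, ← sq, mul_comm]
  gcongr
  exact hM a ha

end Bessel

section Laplacian

variable {ν : Type*}

/-- The column, belonging to the edge `e`, of the oriented incidence matrix of a graph on `ν`. The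
edge is oriented from `e.2` to `e.1`; a loop gives `0`. -/
noncomputable def incidenceVector [DecidableEq ν] (e : ν × ν) : EuclideanSpace ℝ ν :=
  EuclideanSpace.single e.1 1 - EuclideanSpace.single e.2 1

variable [Fintype ν]

lemma inner_incidenceVector [DecidableEq ν] (e : ν × ν) (d : EuclideanSpace ℝ ν) :
    inner ℝ (incidenceVector e) d = d e.1 - d e.2 := by
  simp [incidenceVector, inner_sub_left, EuclideanSpace.inner_single_left]

lemma inner_incidenceVector_incidenceVector_le [DecidableEq ν] (e f : ν × ν) :
    inner ℝ (incidenceVector e) (incidenceVector f) ≤ 1 + if e = f then 1 else 0 := by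
  rw [inner_incidenceVector]
  simp only [incidenceVector, PiLp.sub_apply, PiLp.single_apply, Prod.ext_iff]
  split_ifs <;> first | (norm_num; done) | (exfalso; tauto)

theorem sum_weight_mul_sub_sq_le {S : Finset (ν × ν)} {w : ν × ν → ℝ} {c : ℝ} (hc : 0 ≤ c)
    (hw : ∀ e ∈ S, 0 ≤ w e) (hwc : ∀ e ∈ S, w e ≤ c) {d : EuclideanSpace ℝ ν}
    (hd : ∀ e ∈ S, d e.2 ≤ d e.1) :
    ∑ e ∈ S, w e * (d e.1 - d e.2) ^ 2 ≤ (∑ e ∈ S, w e + c) * ‖d‖ ^ 2 := by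
  classical
  have hK : 0 ≤ ∑ e ∈ S, w e + c := add_nonneg (Finset.sum_nonneg hw) hc
  simp only [← inner_incidenceVector]
  refine sum_mul_inner_sq_le_of_norm_sum_smul_sq_le hK ?_
  set g : ν × ν → ℝ := fun e => inner ℝ (incidenceVector e) d with hg
  have hwg : ∀ e ∈ S, 0 ≤ w e * g e := fun e he =>
    mul_nonneg (hw e he) (by simpa only [hg, inner_incidenceVector] using sub_nonneg.2 (hd e he))
  have hwgg : ∀ e ∈ S, 0 ≤ w e * g e ^ 2 := fun e he => mul_nonneg (hw e he) (sq_nonneg _)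
  calc ‖∑ e ∈ S, (w e * g e) • incidenceVector e‖ ^ 2
      ≤ ∑ e ∈ S, ∑ f ∈ S, w e * g e * (w f * g f) * (1 + if e = f then 1 else 0) := by
        rw [norm_sum_smul_sq]
        gcongr with e he f hf
        · exact mul_nonneg (hwg e he) (hwg f hf)
        · exact inner_incidenceVector_incidenceVector_le e f
    _ = (∑ e ∈ S, w e * g e) ^ 2 + ∑ e ∈ S, w e * (w e * g e ^ 2) := by
        simp only [mul_add, mul_one, mul_ite, mul_zero, Finset.sum_add_distrib, sq,
          Finset.sum_mul_sum, Finset.sum_ite_eq]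
        congr 1
        refine Finset.sum_congr rfl fun e he => ?_
        rw [if_pos he]
        ring
    _ ≤ (∑ e ∈ S, w e) * (∑ e ∈ S, w e * g e ^ 2) + c * ∑ e ∈ S, w e * g e ^ 2 := by
        rw [Finset.mul_sum S _ c]
        gcongr with e he
        · exact Finset.sum_sq_le_sum_mul_sum_of_sq_le_mul S hw hwgg fun e _ => le_of_eq (by ring)
        · exact hwgg e he
        · exact hwc e he
    _ = (∑ e ∈ S, w e + c) * ∑ e ∈ S, w e * g e ^ 2 := by ring

theorem sum_sum_weight_mul_sub_sq_le {w : ν → ν → ℝ} {c : ℝ} (hc : 0 ≤ c)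
    (hw : ∀ i j, 0 ≤ w i j) (hsymm : ∀ i j, w i j = w j i) (hwc : ∀ i j, i ≠ j → w i j ≤ c)
    (d : EuclideanSpace ℝ ν) :
    ∑ i, ∑ j, w i j * (d i - d j) ^ 2 ≤ (∑ i, ∑ j, w i j + 2 * c) * ‖d‖ ^ 2 := by
  let down (x : ν → ν → ℝ) (i j : ν) : ℝ := if d j < d i then x i j else 0
  have horiented : ∑ i, ∑ j, down (fun i j => w i j * (d i - d j) ^ 2) i j ≤
      (∑ i, ∑ j, down w i j + c) * ‖d‖ ^ 2 := by
    have := sum_weight_mul_sub_sq_le (S := {e | d e.2 < d e.1}) (w := fun e => w e.1 e.2) hc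
      (fun e _ => hw e.1 e.2)
      (fun e he => hwc _ _ fun h => (Finset.mem_filter.1 he).2.ne (by rw [h]))
      (fun e he => (Finset.mem_filter.1 he).2.le)
    simpa only [Finset.sum_filter, Fintype.sum_prod_type] using this
  have hfold (x : ν → ν → ℝ) (hx : ∀ i j, x i j = x j i) :
      2 * ∑ i, ∑ j, down x i j = ∑ i, ∑ j, if d i = d j then 0 else x i j := by
    rw [two_mul]
    nth_rw 2 [Finset.sum_comm]
    simp only [← Finset.sum_add_distrib]
    refine Finset.sum_congr rfl fun i _ => Finset.sum_congr rfl fun j _ => ?_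
    rcases lt_trichotomy (d i) (d j) with h | h | h
    · simp [down, h, h.not_gt, h.ne, hx j i]
    · simp [down, h]
    · simp [down, h, h.not_gt, h.ne']
  have hform : 2 * ∑ i, ∑ j, down (fun i j => w i j * (d i - d j) ^ 2) i j =
      ∑ i, ∑ j, w i j * (d i - d j) ^ 2 := by
    rw [hfold _ fun i j => by rw [hsymm]; ring]
    refine Finset.sum_congr rfl fun i _ => Finset.sum_congr rfl fun j _ => ?_
    split_ifs with h <;> simp [h]
  have hweight : 2 * ∑ i, ∑ j, down w i j ≤ ∑ i, ∑ j, w i j := by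
    rw [hfold _ hsymm]
    gcongr with i _ j _
    split_ifs
    exacts [hw i j, le_rfl]
  calc ∑ i, ∑ j, w i j * (d i - d j) ^ 2
      ≤ 2 * ((∑ i, ∑ j, down w i j + c) * ‖d‖ ^ 2) := by rw [← hform]; gcongr
    _ = (2 * ∑ i, ∑ j, down w i j + 2 * c) * ‖d‖ ^ 2 := by ring
    _ ≤ (∑ i, ∑ j, w i j + 2 * c) * ‖d‖ ^ 2 := by gcongr

end Laplacian

section Alternation

variable {ι R : Type*} [Field R] [LinearOrder R] [IsStrictOrderedRing R]
  {x : ι → R} {f : ι → ι → R}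

-- `p` and `q` sum `x` over the odd and the even positions when `x` is listed in decreasing order.
lemma exists_add_eq_sum_and_sum_sum_add_sum_sq_le (hx : ∀ a, 0 ≤ x a) (hself : ∀ a, f a a = 0)
    (hsymm : ∀ a b, f a b = f b a)
    (hf : ∀ a (t : Finset ι) (M : R), 0 ≤ M → (∀ b ∈ t, x b ≤ M) →
      ∑ b ∈ t, f a b ≤ x a * (∑ b ∈ t, x b + M)) (s : Finset ι) :
    ∃ p q : R, 0 ≤ p ∧ 0 ≤ q ∧ p + q = ∑ a ∈ s, x a ∧ (∀ a ∈ s, x a ≤ p) ∧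
      ∑ a ∈ s, ∑ b ∈ s, f a b + ∑ a ∈ s, x a ^ 2 ≤ (∑ a ∈ s, x a) ^ 2 + 2 * (p * q) := by
  classical
  induction s using Finset.induction_on_max_value x with
  | empty => exact ⟨0, 0, by simp⟩
  | insert a s ha hmax ih =>
    obtain ⟨p, q, hp, hq, hpq, hle, hsum⟩ := ih
    refine ⟨q + x a, p, add_nonneg hq (hx a), hp, ?_, ?_, ?_⟩
    · rw [Finset.sum_insert ha, ← hpq]
      ring
    · intro b hb
      rcases Finset.mem_insert.1 hb with rfl | hb
      · exact le_add_of_nonneg_left hq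
      · exact (hmax b hb).trans (le_add_of_nonneg_left hq)
    · have hrow := hf a s p hp hle
      have hcol : ∑ b ∈ s, f b a = ∑ b ∈ s, f a b := Finset.sum_congr rfl fun b _ => hsymm b a
      simp only [Finset.sum_insert ha, Finset.sum_add_distrib, hself, hcol]
      linear_combination hsum + 2 * hrow

theorem sum_sum_add_sum_sq_le_three_halves_mul_sq (hx : ∀ a, 0 ≤ x a) (hself : ∀ a, f a a = 0)
    (hsymm : ∀ a b, f a b = f b a)
    (hf : ∀ a (t : Finset ι) (M : R), 0 ≤ M → (∀ b ∈ t, x b ≤ M) →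
      ∑ b ∈ t, f a b ≤ x a * (∑ b ∈ t, x b + M)) (s : Finset ι) :
    ∑ a ∈ s, ∑ b ∈ s, f a b + ∑ a ∈ s, x a ^ 2 ≤ 3 / 2 * (∑ a ∈ s, x a) ^ 2 := by
  obtain ⟨p, q, -, -, hpq, -, hsum⟩ :=
    exists_add_eq_sum_and_sum_sum_add_sum_sq_le hx hself hsymm hf s
  rw [← hpq] at hsum ⊢
  linear_combination hsum + sq_nonneg (p - q) / 2

end Alternation

section Recombination

variable {R ι κ E F : Type*} [Fintype ι]

/-- The family of linear combinations of the vectors `B a` whose coefficients are the columns of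
`U`: formally the row vector `B` times the matrix `U`. -/
def recombine [Semiring R] [AddCommMonoid E] [Module R E] (U : Matrix ι κ R) (B : ι → E) (c : κ) :
    E :=
  ∑ a, U a c • B a

lemma map_recombine [Semiring R] [AddCommMonoid E] [Module R E] [AddCommMonoid F] [Module R F]
    (f : E →ₗ[R] F) (U : Matrix ι κ R) (B : ι → E) (c : κ) :
    f (recombine U B c) = recombine U (fun a => f (B a)) c := by
  simp only [recombine, map_sum, map_smul]

lemma isSymm_recombine {ν α : Type*} [Semiring R] [AddCommMonoid α] [Module R α]
    (U : Matrix ι κ R) {B : ι → Matrix ν ν α} (hB : ∀ a, (B a).IsSymm) (c : κ) :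
    (recombine U B c).IsSymm := by
  simp only [IsSymm, recombine, transpose_sum, transpose_smul, (hB _).eq]

variable {𝕜 : Type*} [RCLike 𝕜] [SeminormedAddCommGroup E] [InnerProductSpace 𝕜 E]
  [SeminormedAddCommGroup F] [InnerProductSpace 𝕜 F]

lemma gram_recombine (U : Matrix ι κ 𝕜) (B : ι → E) :
    gram 𝕜 (recombine U B) = Uᴴ * gram 𝕜 B * U := by
  ext c e
  simp only [gram_apply, recombine, sum_inner, inner_sum, inner_smul_left, inner_smul_right,
    Matrix.mul_apply, conjTranspose_apply, RCLike.star_def, Finset.sum_mul]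
  refine Finset.sum_congr rfl fun b _ => ?_
  rw [Finset.mul_sum]
  exact Finset.sum_congr rfl fun a _ => by ring

lemma trace_gram (B : ι → E) : (gram 𝕜 B).trace = ((∑ a, ‖B a‖ ^ 2 : ℝ) : 𝕜) := by
  simp [Matrix.trace, gram_apply, inner_self_eq_norm_sq_to_K]

variable [DecidableEq ι]

lemma sum_norm_sq_recombine (U : unitaryGroup ι 𝕜) (B : ι → E) :
    ∑ c, ‖recombine (U : Matrix ι ι 𝕜) B c‖ ^ 2 = ∑ a, ‖B a‖ ^ 2 := by
  rw [← RCLike.ofReal_inj (K := 𝕜), ← trace_gram, ← trace_gram, gram_recombine, trace_mul_cycle,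
    ← star_eq_conjTranspose, ← Unitary.coe_star, Unitary.coe_mul_star_self, Matrix.one_mul]

lemma sum_sum_norm_sq_map₂_recombine (f : E →ₗ[𝕜] E →ₗ[𝕜] F) (U : unitaryGroup ι 𝕜)
    (B : ι → E) :
    ∑ c, ∑ e, ‖f (recombine (U : Matrix ι ι 𝕜) B c) (recombine (U : Matrix ι ι 𝕜) B e)‖ ^ 2 =
      ∑ a, ∑ b, ‖f (B a) (B b)‖ ^ 2 := by
  simp only [map_recombine (f _), sum_norm_sq_recombine]
  rw [Finset.sum_comm, Finset.sum_comm (f := fun a b => ‖f (B a) (B b)‖ ^ 2)]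
  refine Finset.sum_congr rfl fun b _ => ?_
  have hflip := sum_norm_sq_recombine U fun a => f.flip (B b) (B a)
  simp only [← map_recombine (f.flip (B b))] at hflip
  exact hflip

theorem exists_unitary_pairwise_inner_recombine_eq_zero (B : ι → E) :
    ∃ U : unitaryGroup ι 𝕜, Pairwise fun c e =>
      inner 𝕜 (recombine (U : Matrix ι ι 𝕜) B c) (recombine (U : Matrix ι ι 𝕜) B e) = 0 := by
  have hG : (gram 𝕜 B).IsHermitian := isHermitian_gram 𝕜 B
  refine ⟨hG.eigenvectorUnitary, fun c e hce => ?_⟩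
  have hdiag : gram 𝕜 (recombine (hG.eigenvectorUnitary : Matrix ι ι 𝕜) B) =
      diagonal (RCLike.ofReal ∘ hG.eigenvalues) := by
    rw [gram_recombine, ← hG.conjStarAlgAut_star_eigenvectorUnitary,
      Unitary.conjStarAlgAut_star_apply, star_eq_conjTranspose]
  exact (congr_fun₂ hdiag c e).trans (diagonal_apply_ne _ hce)

end Recombination

section Frobenius

open scoped Matrix.Norms.Frobenius

variable {𝕜 ι μ ν : Type*} [RCLike 𝕜] [Fintype μ] [Fintype ν]

lemma frobenius_norm_sq {α : Type*} [SeminormedAddCommGroup α] (A : Matrix μ ν α) :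
    ‖A‖ ^ 2 = ∑ i, ∑ j, ‖A i j‖ ^ 2 := by
  rw [frobenius_norm_def, ← Real.sqrt_eq_rpow, Real.sq_sqrt (by positivity)]
  simp only [Real.rpow_two]

/-- The inner product `tr (Aᴴ B)` on matrices; it induces the Frobenius norm. -/
noncomputable local instance frobeniusInnerProductSpace :
    InnerProductSpace 𝕜 (Matrix μ ν 𝕜) where
  inner A B := (Aᴴ * B).trace
  norm_sq_eq_re_inner A := by
    rw [frobenius_norm_sq, Finset.sum_comm]
    simp [Matrix.trace, Matrix.mul_apply, RCLike.conj_mul]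
  conj_inner_symm A B := by
    rw [starRingEnd_apply, ← trace_conjTranspose, conjTranspose_mul, conjTranspose_conjTranspose]
  add_left A B C := by rw [conjTranspose_add, Matrix.add_mul, trace_add]
  smul_left A B r := by
    rw [conjTranspose_smul, Matrix.smul_mul, trace_smul, smul_eq_mul, starRingEnd_apply]

lemma frobenius_inner_def (A B : Matrix μ ν 𝕜) : inner 𝕜 A B = (Aᴴ * B).trace :=
  rfl

lemma inner_conjStarAlgAut [DecidableEq ν] (U : unitaryGroup ν 𝕜) (A B : Matrix ν ν 𝕜) :
    inner 𝕜 (Unitary.conjStarAlgAut 𝕜 _ U A) (Unitary.conjStarAlgAut 𝕜 _ U B) = inner 𝕜 A B := by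
  simp only [frobenius_inner_def, ← star_eq_conjTranspose, ← map_star, ← map_mul]
  rw [Unitary.conjStarAlgAut_apply, trace_mul_cycle, Unitary.coe_star_mul_self, Matrix.one_mul]

lemma norm_conjStarAlgAut [DecidableEq ν] (U : unitaryGroup ν 𝕜) (A : Matrix ν ν 𝕜) :
    ‖Unitary.conjStarAlgAut 𝕜 _ U A‖ = ‖A‖ := by
  simp only [@norm_eq_sqrt_re_inner 𝕜, inner_conjStarAlgAut]

lemma norm_lie_diagonal_sq [DecidableEq ν] (d : ν → ℝ) (A : Matrix ν ν ℝ) :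
    ‖⁅diagonal d, A⁆‖ ^ 2 = ∑ i, ∑ j, A i j ^ 2 * (d i - d j) ^ 2 := by
  simp only [frobenius_norm_sq, Ring.lie_def, Matrix.sub_apply, diagonal_mul, mul_diagonal,
    Real.norm_eq_abs, sq_abs]
  exact Finset.sum_congr rfl fun i _ => Finset.sum_congr rfl fun j _ => by ring

section Orthogonal

variable {s : Finset ι} {B : ι → Matrix ν ν ℝ} {M : ℝ}

lemma sum_sq_apply_le_of_pairwise_orthogonal (hsymm : ∀ a ∈ s, (B a).IsSymm)
    (horth : (s : Set ι).Pairwise fun a b => inner ℝ (B a) (B b) = 0) (hM0 : 0 ≤ M)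
    (hM : ∀ a ∈ s, ‖B a‖ ^ 2 ≤ M) {i j : ν} (hij : i ≠ j) :
    ∑ a ∈ s, B a i j ^ 2 ≤ M / 2 := by
  classical
  let X : Matrix ν ν ℝ := Matrix.single i j 1 + Matrix.single j i 1
  have hinner (a : ι) (ha : a ∈ s) : inner ℝ (B a) X = 2 * B a i j := by
    simp [X, frobenius_inner_def, Matrix.mul_add, trace_mul_single, (hsymm a ha).apply i j, two_mul]
  have hnorm : ‖X‖ ^ 2 = 2 := by
    rw [← real_inner_self_eq_norm_sq, frobenius_inner_def]
    simp [X, Matrix.mul_add, trace_mul_single, hij, hij.symm, one_add_one_eq_two]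
  have hbessel := sum_inner_sq_le_of_pairwise_orthogonal hM0 horth hM X
  rw [hnorm, Finset.sum_congr rfl fun a ha => by rw [hinner a ha, mul_pow], ← Finset.mul_sum]
    at hbessel
  linarith

lemma sum_norm_lie_diagonal_sq_le [DecidableEq ν] (hsymm : ∀ a ∈ s, (B a).IsSymm)
    (horth : (s : Set ι).Pairwise fun a b => inner ℝ (B a) (B b) = 0) (hM0 : 0 ≤ M)
    (hM : ∀ a ∈ s, ‖B a‖ ^ 2 ≤ M) (d : ν → ℝ) :
    ∑ a ∈ s, ‖⁅diagonal d, B a⁆‖ ^ 2 ≤ ‖diagonal d‖ ^ 2 * (∑ a ∈ s, ‖B a‖ ^ 2 + M) := by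
  let w (i j : ν) : ℝ := ∑ a ∈ s, B a i j ^ 2
  have hlie : ∑ a ∈ s, ‖⁅diagonal d, B a⁆‖ ^ 2 = ∑ i, ∑ j, w i j * (d i - d j) ^ 2 := by
    simp only [norm_lie_diagonal_sq, w, Finset.sum_mul, Finset.sum_comm (s := s)]
  have hnorm : ∑ a ∈ s, ‖B a‖ ^ 2 = ∑ i, ∑ j, w i j := by
    simp only [frobenius_norm_sq, w, Finset.sum_comm (s := s), Real.norm_eq_abs, sq_abs]
  have hwsymm (i j : ν) : w i j = w j i :=
    Finset.sum_congr rfl fun a ha => by rw [(hsymm a ha).apply]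
  have hoff (i j : ν) (hij : i ≠ j) : w i j ≤ M / 2 :=
    sum_sq_apply_le_of_pairwise_orthogonal hsymm horth hM0 hM hij
  rw [hlie, hnorm, frobenius_norm_diagonal, mul_comm (‖_‖ ^ 2), ← mul_div_cancel₀ M two_ne_zero]
  exact sum_sum_weight_mul_sub_sq_le (by positivity)
    (fun i j => Finset.sum_nonneg fun a _ => sq_nonneg _) hwsymm hoff (WithLp.toLp 2 d)

theorem sum_norm_lie_sq_le {A : Matrix ν ν ℝ} (hA : A.IsSymm) (hsymm : ∀ a ∈ s, (B a).IsSymm)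
    (horth : (s : Set ι).Pairwise fun a b => inner ℝ (B a) (B b) = 0) (hM0 : 0 ≤ M)
    (hM : ∀ a ∈ s, ‖B a‖ ^ 2 ≤ M) :
    ∑ a ∈ s, ‖⁅A, B a⁆‖ ^ 2 ≤ ‖A‖ ^ 2 * (∑ a ∈ s, ‖B a‖ ^ 2 + M) := by
  classical
  have hA' : A.IsHermitian := by rwa [IsHermitian, conjTranspose_eq_transpose_of_trivial]
  let φ := Unitary.conjStarAlgAut ℝ (Matrix ν ν ℝ) (star hA'.eigenvectorUnitary)
  have hdiag : φ A = diagonal hA'.eigenvalues := hA'.conjStarAlgAut_star_eigenvectorUnitary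
  have hlie (X : Matrix ν ν ℝ) : ‖⁅φ A, φ X⁆‖ = ‖⁅A, X⁆‖ := by
    rw [Ring.lie_def, ← map_mul, ← map_mul, ← map_sub, norm_conjStarAlgAut, Ring.lie_def]
  have hφsymm (a : ι) (ha : a ∈ s) : (φ (B a)).IsSymm := by
    rw [IsSymm, ← conjTranspose_eq_transpose_of_trivial, ← star_eq_conjTranspose, ← map_star,
      star_eq_conjTranspose, conjTranspose_eq_transpose_of_trivial, hsymm a ha]
  have hφ := sum_norm_lie_diagonal_sq_le hφsymm
    (fun a ha b hb hab => (inner_conjStarAlgAut _ _ _).trans (horth ha hb hab)) hM0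
    (fun a ha => by simpa only [φ, norm_conjStarAlgAut] using hM a ha) hA'.eigenvalues
  simpa only [← hdiag, hlie, φ, norm_conjStarAlgAut] using hφ

theorem sum_sum_norm_lie_sq_add_sum_norm_sq_sq_le (hsymm : ∀ a, (B a).IsSymm)
    (horth : Pairwise fun a b => inner ℝ (B a) (B b) = 0) (s : Finset ι) :
    ∑ a ∈ s, ∑ b ∈ s, ‖⁅B a, B b⁆‖ ^ 2 + ∑ a ∈ s, (‖B a‖ ^ 2) ^ 2 ≤
      3 / 2 * (∑ a ∈ s, ‖B a‖ ^ 2) ^ 2 :=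
  sum_sum_add_sum_sq_le_three_halves_mul_sq (f := fun a b => ‖⁅B a, B b⁆‖ ^ 2)
    (fun a => sq_nonneg ‖B a‖) (fun a => by simp [Ring.lie_def])
    (fun a b => by rw [Ring.lie_def, norm_sub_rev, Ring.lie_def])
    (fun a _ _ => sum_norm_lie_sq_le (hsymm a) (fun b _ => hsymm b) (horth.set_pairwise _)) s

end Orthogonal

theorem li_li_general [Fintype ι] (B : ι → Matrix ν ν ℝ) (hsymm : ∀ a, (B a).IsSymm) :
    ∑ a, ∑ b, ‖⁅B a, B b⁆‖ ^ 2 + ∑ a, ∑ b, inner ℝ (B a) (B b) ^ 2 ≤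
      3 / 2 * (∑ a, ‖B a‖ ^ 2) ^ 2 := by
  classical
  obtain ⟨U, horth⟩ := exists_unitary_pairwise_inner_recombine_eq_zero (𝕜 := ℝ) B
  set C := recombine (U : Matrix ι ι ℝ) B
  have hlie : ∑ c, ∑ e, ‖⁅C c, C e⁆‖ ^ 2 = ∑ a, ∑ b, ‖⁅B a, B b⁆‖ ^ 2 :=
    sum_sum_norm_sq_map₂_recombine
      (LinearMap.mul ℝ (Matrix ν ν ℝ) - (LinearMap.mul ℝ (Matrix ν ν ℝ)).flip) U B
  have hinner : ∑ c, ∑ e, inner ℝ (C c) (C e) ^ 2 = ∑ a, ∑ b, inner ℝ (B a) (B b) ^ 2 := by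
    simpa only [innerₗ_apply_apply, Real.norm_eq_abs, sq_abs] using
      sum_sum_norm_sq_map₂_recombine (innerₗ (Matrix ν ν ℝ)) U B
  have hself (c : ι) : ∑ e, inner ℝ (C c) (C e) ^ 2 = (‖C c‖ ^ 2) ^ 2 := by
    rw [Finset.sum_eq_single c (fun e _ hec => by rw [horth hec.symm, sq, mul_zero]) (by simp),
      real_inner_self_eq_norm_sq]
  rw [← hlie, ← hinner, ← sum_norm_sq_recombine U B, Finset.sum_congr rfl fun c _ => hself c]
  exact sum_sum_norm_lie_sq_add_sum_norm_sq_sq_le (isSymm_recombine _ hsymm) horth _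

lemma frobInner_eq_inner {n : ℕ} (A B : Matrix (Fin n) (Fin n) ℝ) :
    frobInner A B = inner ℝ A B := by
  rw [frobenius_inner_def, conjTranspose_eq_transpose_of_trivial, frobInner]

lemma frobSq_eq_norm_sq {n : ℕ} (A : Matrix (Fin n) (Fin n) ℝ) : frobSq A = ‖A‖ ^ 2 := by
  rw [frobSq, frobInner_eq_inner, real_inner_self_eq_norm_sq]

lemma mcomm_eq_lie {n : ℕ} (A B : Matrix (Fin n) (Fin n) ℝ) : mcomm A B = ⁅A, B⁆ :=
  rfl

end Frobenius

/-- Li–Li inequality. -/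
theorem li_li {n m : ℕ} (B : Fin m → Matrix (Fin n) (Fin n) ℝ)
    (hsymm : ∀ α, (B α).IsSymm) :
    (∑ α, ∑ β, frobSq (mcomm (B α) (B β))) +
      (∑ α, ∑ β, (frobInner (B α) (B β)) ^ 2) ≤
      (3 / 2) * (∑ α, frobSq (B α)) ^ 2 := by
  simpa only [frobSq_eq_norm_sq, mcomm_eq_lie, frobInner_eq_inner] using li_li_general B hsymm
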